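/- Fix r ∈ [1,2). Let X be a random variable with C_𝕍(|X|^r) < ∞, and let (X_j) satisfy 𝕍(|X_j| ≥ x) ≤ C·𝕍(|X| ≥ x) for all x ≥ 0 and j ≥ 1 (C a constant). Define truncations Y_j = (−j^{1/r}) ∨ X_j ∧ j^{1/r}. Then Σ_{j=1}^∞ 𝔼[Y_j²]/j^{2/r} < ∞; in fact Σ_{j=1}^∞ 𝔼[Y_j²]/j^{2/r} ≤ (1+4C)·Σ_{j=1}^∞ j^{−2/r} + (8rC/(2−r))·C_𝕍(|X|^r). -/

import Mathlib

open MeasureTheory Set Filter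

lemma aux_step (a : ℝ) (ha1 : 1 < a) (ha2 : a ≤ 2) (x : ℝ) (hx : 1 ≤ x) :
    (x + 1) ^ a ≤ x ^ a + 4 * x ^ (a - 1) := by
  have hx0 : 0 < x := by linarith
  have h1 : x + 1 = x * (1 + 1 / x) := by field_simp
  have h2 : (1 + 1 / x) ^ a ≤ 1 + 4 / x := by
    have hu : 0 < 1 / x := by positivity
    have hu1 : 1 / x ≤ 1 := by rw [div_le_one hx0]; exact hx
    calc (1 + 1 / x) ^ a ≤ (1 + 1 / x) ^ (2:ℝ) :=
          Real.rpow_le_rpow_of_exponent_le (by linarith) ha2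
      _ = (1 + 1 / x) ^ 2 := by norm_cast
      _ ≤ 1 + 4 * (1 / x) := by nlinarith
      _ = 1 + 4 / x := by ring
  rw [h1, Real.mul_rpow hx0.le (by positivity), Real.rpow_sub_one hx0.ne']
  have h3 : 0 < x ^ a := by positivity
  calc x ^ a * (1 + 1 / x) ^ a ≤ x ^ a * (1 + 4 / x) := by gcongr
    _ = _ := by field_simp

lemma aux_tail_step (p : ℝ) (hp : 0 < p) (x : ℝ) (hx : 1 < x) :
    x ^ (-(p + 1)) ≤ (1 / p) * ((x - 1) ^ (-p) - x ^ (-p)) := by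
  have hx0 : 0 < x := by linarith
  have hu1 : 0 < 1 - 1 / x := by
    have : 1 / x < 1 := by rw [div_lt_one hx0]; exact hx
    linarith
  have h1 : x - 1 = x * (1 - 1 / x) := by field_simp
  have h2 : 1 + p / x ≤ (1 - 1 / x) ^ (-p) := by
    rw [Real.rpow_def_of_pos hu1]
    have hl := Real.log_le_sub_one_of_pos hu1
    have := Real.add_one_le_exp (Real.log (1 - 1 / x) * -p)
    have h3 : p / x = p * (1 / x) := by ring
    rw [h3]
    nlinarith
  have h3 : x ^ (-(p + 1)) = x ^ (-p) / x := by
    rw [← Real.rpow_sub_one hx0.ne']; congr 1; ring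
  rw [h1, Real.mul_rpow hx0.le hu1.le, h3]
  have h4 : 0 < x ^ (-p) := by positivity
  calc x ^ (-p) / x = 1 / p * (x ^ (-p) * (1 + p / x) - x ^ (-p)) := by field_simp; ring
    _ ≤ _ := by gcongr

lemma aux_tail (p : ℝ) (hp : 0 < p) (k N : ℕ) (hk : 1 ≤ k) (hkN : k ≤ N) :
    ∑ n ∈ Finset.Ico k N, ((n:ℝ) + 1) ^ (-(p + 1))
      ≤ (1 / p) * ((k:ℝ) ^ (-p) - (N:ℝ) ^ (-p)) := by
  induction N, hkN using Nat.le_induction with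
  | base => simp
  | succ n hn ih =>
    rw [Finset.sum_Ico_succ_top hn]
    have hn1 : (1:ℝ) ≤ n := by exact_mod_cast hk.trans hn
    have := aux_tail_step p hp ((n:ℝ) + 1) (by linarith)
    push_cast
    rw [add_sub_cancel_right] at this
    linarith

lemma aux_trunc (r : ℝ) (hr1 : 1 ≤ r) (hr2 : r < 2) (x : ℝ) (j : ℕ) :
    (min x (((j:ℝ) + 1) ^ (1 / r))) ^ 2 * (if 0 ≤ x then 1 else 0) ≤
      1 + 4 * ∑ k ∈ Finset.range j, ((k:ℝ) + 1) ^ (2 / r - 1) *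
        (if ((k:ℝ) + 1) ^ (1 / r) ≤ x then 1 else 0) := by
  have hr0 : 0 < r := by linarith
  have hsq : ∀ y : ℝ, 0 ≤ y → (y ^ (1 / r)) ^ 2 = y ^ (2 / r) := by
    intro y hy
    rw [← Real.rpow_natCast, ← Real.rpow_mul hy]; congr 1; push_cast; ring
  by_cases hx : 0 ≤ x
  swap
  · simp only [hx, if_false, mul_zero]
    have : 0 ≤ ∑ k ∈ Finset.range j, ((k:ℝ) + 1) ^ (2 / r - 1) *
        (if ((k:ℝ) + 1) ^ (1 / r) ≤ x then (1:ℝ) else 0) :=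
      Finset.sum_nonneg fun k _ => by split_ifs <;> positivity
    linarith
  simp only [hx, if_true, mul_one]
  induction j with
  | zero =>
    simp
    rw [abs_of_nonneg (le_min hx zero_le_one)]
    exact min_le_right _ _
  | succ j ih =>
    rw [Finset.sum_range_succ]
    push_cast
    by_cases h : ((j:ℝ) + 1) ^ (1 / r) ≤ x
    · rw [min_eq_right h, hsq _ (by positivity)] at ih
      simp only [h, if_true, mul_one]
      have h1 : (min x (((j:ℝ) + 1 + 1) ^ (1 / r))) ^ 2 ≤ ((j:ℝ) + 1 + 1) ^ (2 / r) := by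
        rw [← hsq _ (by positivity)]
        exact pow_le_pow_left₀ (le_min hx (by positivity)) (min_le_right _ _) 2
      have h2 := aux_step (2 / r) (by rw [lt_div_iff₀ hr0]; linarith)
        (by rw [div_le_iff₀ hr0]; linarith) ((j:ℝ) + 1) (by linarith [Nat.cast_nonneg (α := ℝ) j])
      linarith
    · have h' := (not_le.mp h).le
      simp only [h, if_false, mul_zero, add_zero]
      rw [min_eq_left h'] at ih
      rw [min_eq_left]
      · exact ih
      · refine h'.trans (Real.rpow_le_rpow (by positivity) (by linarith) (by positivity))

lemma aux_sup_nonneg {Ω : Type*} [MeasurableSpace Ω] (S : Set (Measure Ω)) (f : Measure Ω → ℝ)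
    (hf : ∀ P, 0 ≤ f P) : 0 ≤ ⨆ P ∈ S, f P :=
  Real.iSup_nonneg fun P => Real.iSup_nonneg fun _ => hf P

lemma aux_sup_le {Ω : Type*} [MeasurableSpace Ω] (S : Set (Measure Ω)) (f : Measure Ω → ℝ)
    (B : ℝ) (hB : 0 ≤ B) (hf : ∀ P ∈ S, f P ≤ B) : ⨆ P ∈ S, f P ≤ B :=
  Real.iSup_le (fun P => Real.iSup_le (fun h => hf P h) hB) hB

lemma aux_le_sup {Ω : Type*} [MeasurableSpace Ω] (S : Set (Measure Ω)) (f : Measure Ω → ℝ)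
    (B : ℝ) (hB : 0 ≤ B) (hf : ∀ P ∈ S, f P ≤ B) (P : Measure Ω) (hPS : P ∈ S) :
    f P ≤ ⨆ P ∈ S, f P := by
  have h1 : f P = ⨆ _ : P ∈ S, f P := by
    haveI : Nonempty (P ∈ S) := ⟨hPS⟩
    rw [ciSup_const]
  rw [h1]
  refine le_ciSup (f := fun P => ⨆ _ : P ∈ S, f P) ⟨B, ?_⟩ P
  rintro _ ⟨Q, rfl⟩
  exact Real.iSup_le (fun h => hf Q h) hB

/-- The deterministic summation estimate. -/
lemma aux_sum (r : ℝ) (hr1 : 1 ≤ r) (hr2 : r < 2) (C : ℝ) (hC : 0 < C) (g : ℝ → ℝ)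
    (hg0 : ∀ t, 0 ≤ g t) (hg1 : ∀ t, g t ≤ 1) (hga : AntitoneOn g (Set.Ici 0))
    (hgi : IntegrableOn g (Set.Ioi 0)) (N : ℕ) (S : ℝ)
    (hS : ∀ N : ℕ, ∑ n ∈ Finset.range N, ((n:ℝ) + 1) ^ (-(2 / r)) ≤ S) :
    ∑ n ∈ Finset.range N, (1 + 4 * ∑ k ∈ Finset.range (n + 1), ((k:ℝ) + 1) ^ (2 / r - 1) *
        (C * g (k + 1))) * ((n:ℝ) + 1) ^ (-(2 / r))
      ≤ (1 + 4 * C) * S + (8 * r * C / (2 - r)) * ∫ t in Set.Ioi (0:ℝ), g t := by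
  have hr0 : 0 < r := by linarith
  have hp : 0 < 2 / r - 1 := by
    have : 1 < 2 / r := by rw [lt_div_iff₀ hr0]; linarith
    linarith
  have hp1 : 2 / r - 1 ≤ 1 := by
    have : 2 / r ≤ 2 := by rw [div_le_iff₀ hr0]; linarith
    linarith
  have hpr : 1 / (2 / r - 1) = r / (2 - r) := by
    have : 2 - r ≠ 0 := by linarith
    field_simp
  have hr2' : 0 < r / (2 - r) := div_pos hr0 (by linarith)
  have hint : ∑ k ∈ Finset.range N, g ((k:ℝ) + 1) ≤ ∫ t in Set.Ioi (0:ℝ), g t := by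
    have h := AntitoneOn.sum_le_integral (f := g) (x₀ := 0) (a := N)
      (hga.mono fun x hx => hx.1)
    simp only [zero_add, Nat.cast_add, Nat.cast_one] at h
    refine h.trans ?_
    rw [intervalIntegral.integral_of_le (by positivity)]
    exact setIntegral_mono_set hgi (ae_of_all _ fun t => hg0 t)
      (HasSubset.Subset.eventuallyLE fun x hx => hx.1)
  have hswap : ∑ n ∈ Finset.range N, (∑ k ∈ Finset.range (n + 1), ((k:ℝ) + 1) ^ (2 / r - 1) *
        (C * g (k + 1))) * ((n:ℝ) + 1) ^ (-(2 / r))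
      = ∑ k ∈ Finset.range N, ((k:ℝ) + 1) ^ (2 / r - 1) * (C * g (k + 1)) *
          ∑ n ∈ Finset.Ico k N, ((n:ℝ) + 1) ^ (-(2 / r)) := by
    simp_rw [Finset.sum_mul, Finset.mul_sum]
    refine Finset.sum_comm' fun n k => ?_
    simp only [Finset.mem_range, Finset.mem_Ico]
    omega
  have hterm : ∀ k ∈ Finset.range N, ((k:ℝ) + 1) ^ (2 / r - 1) * (C * g (k + 1)) *
          ∑ n ∈ Finset.Ico k N, ((n:ℝ) + 1) ^ (-(2 / r))
        ≤ (if k = 0 then C * S else 0) + 2 * C * (r / (2 - r)) * g (k + 1) := by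
    intro k hk
    rw [Finset.mem_range] at hk
    rcases Nat.eq_zero_or_pos k with rfl | hk0
    · simp only [Nat.cast_zero, zero_add, Real.one_rpow, one_mul, if_true, Nat.Ico_zero_eq_range]
      have h1 := hS N
      have h2 : 0 ≤ ∑ n ∈ Finset.range N, ((n:ℝ) + 1) ^ (-(2 / r)) :=
        Finset.sum_nonneg fun _ _ => by positivity
      have h3 : 0 ≤ 2 * C * (r / (2 - r)) * g 1 := mul_nonneg (by positivity) (hg0 1)
      have h4 : C * g 1 * ∑ n ∈ Finset.range N, ((n:ℝ) + 1) ^ (-(2 / r)) ≤ C * 1 * S := by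
        gcongr
        exact hg1 1
      linarith
    · have hk1 : (1:ℝ) ≤ k := by exact_mod_cast hk0
      have hk0' : (0:ℝ) < k := by linarith
      have ht := aux_tail (2 / r - 1) hp k N hk0 hk.le
      rw [sub_add_cancel, hpr] at ht
      have ht2 : ∑ n ∈ Finset.Ico k N, ((n:ℝ) + 1) ^ (-(2 / r))
          ≤ r / (2 - r) * (k:ℝ) ^ (-(2 / r - 1)) := by
        refine ht.trans ?_
        gcongr
        have : 0 ≤ (N:ℝ) ^ (-(2 / r - 1)) := by positivity
        linarith
      have h2 : ((k:ℝ) + 1) ^ (2 / r - 1) * (k:ℝ) ^ (-(2 / r - 1)) ≤ 2 := by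
        rw [Real.rpow_neg hk0'.le, ← div_eq_mul_inv, ← Real.div_rpow (by positivity) hk0'.le]
        have h3 : 1 ≤ ((k:ℝ) + 1) / k := by rw [le_div_iff₀ hk0']; linarith
        calc (((k:ℝ) + 1) / k) ^ (2 / r - 1) ≤ (((k:ℝ) + 1) / k) ^ (1:ℝ) :=
              Real.rpow_le_rpow_of_exponent_le h3 hp1
          _ = ((k:ℝ) + 1) / k := Real.rpow_one _
          _ ≤ 2 := by rw [div_le_iff₀ hk0']; linarith
      have hgk := hg0 ((k:ℝ) + 1)
      simp only [hk0.ne', if_false, zero_add]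
      calc ((k:ℝ) + 1) ^ (2 / r - 1) * (C * g (k + 1)) *
            ∑ n ∈ Finset.Ico k N, ((n:ℝ) + 1) ^ (-(2 / r))
          ≤ ((k:ℝ) + 1) ^ (2 / r - 1) * (C * g (k + 1)) *
            (r / (2 - r) * (k:ℝ) ^ (-(2 / r - 1))) := by gcongr
        _ = (((k:ℝ) + 1) ^ (2 / r - 1) * (k:ℝ) ^ (-(2 / r - 1))) *
            (C * (r / (2 - r)) * g (k + 1)) := by ring
        _ ≤ 2 * (C * (r / (2 - r)) * g (k + 1)) := by gcongr
        _ = _ := by ring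
  have hS0 : 0 ≤ S := by simpa using hS 0
  have hsum := Finset.sum_le_sum hterm
  rw [← hswap, Finset.sum_add_distrib, ← Finset.mul_sum] at hsum
  have hite : ∑ k ∈ Finset.range N, (if k = 0 then C * S else 0) ≤ C * S := by
    rw [Finset.sum_ite_eq' (Finset.range N) 0 (fun _ => C * S)]
    split_ifs
    · exact le_rfl
    · positivity
  have hcoef : 0 ≤ 2 * C * (r / (2 - r)) := by positivity
  have hlast := mul_le_mul_of_nonneg_left hint hcoef
  have hSN := hS N
  simp_rw [add_mul, one_mul, mul_assoc (4:ℝ)]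
  rw [Finset.sum_add_distrib, ← Finset.mul_sum]
  have : 8 * r * C / (2 - r) = 4 * (2 * C * (r / (2 - r))) := by ring
  rw [this]
  linarith

theorem stmt8 {Ω : Type*} [MeasurableSpace Ω] (𝒫₀ : Set (Measure Ω)) (hne : 𝒫₀.Nonempty)
    (hP : ∀ P ∈ 𝒫₀, IsProbabilityMeasure P)
    (r : ℝ) (hr1 : 1 ≤ r) (hr2 : r < 2)
    (X : Ω → ℝ) (hX : Measurable X) (Xs : ℕ → Ω → ℝ) (hXs : ∀ j, Measurable (Xs j))
    (hCh : IntegrableOn (fun t => ⨆ P ∈ 𝒫₀, (P {ω | t ≤ |X ω|^r}).toReal) (Set.Ioi 0))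
    (C : ℝ) (hC : 0 < C)
    (hdom : ∀ x : ℝ, 0 ≤ x → ∀ j : ℕ, 1 ≤ j →
      (⨆ P ∈ 𝒫₀, (P {ω | x ≤ |Xs j ω|}).toReal) ≤ C * ⨆ P ∈ 𝒫₀, (P {ω | x ≤ |X ω|}).toReal)
    (Y : ℕ → Ω → ℝ)
    (hY : ∀ j ω, Y j ω = max (-((j:ℝ)^(1/r))) (min (Xs j ω) ((j:ℝ)^(1/r)))) :
    Summable (fun j : ℕ => if 1 ≤ j then
        (⨆ P ∈ 𝒫₀, ∫ ω, (Y j ω)^2 ∂P) / (j:ℝ)^(2/r) else 0) ∧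
    (∑' j : ℕ, if 1 ≤ j then (⨆ P ∈ 𝒫₀, ∫ ω, (Y j ω)^2 ∂P) / (j:ℝ)^(2/r) else 0)
      ≤ (1 + 4*C) * (∑' j : ℕ, if 1 ≤ j then (j:ℝ)^(-(2/r)) else 0)
        + (8*r*C/(2-r)) * ∫ t in Set.Ioi (0:ℝ), ⨆ P ∈ 𝒫₀, (P {ω | t ≤ |X ω|^r}).toReal := by
  have hr0 : 0 < r := by linarith
  set g : ℝ → ℝ := fun t => ⨆ P ∈ 𝒫₀, (P {ω | t ≤ |X ω|^r}).toReal with hg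
  have hprob1 : ∀ (A : Set Ω), ∀ P ∈ 𝒫₀, (P A).toReal ≤ 1 := by
    intro A P hPm
    haveI := hP P hPm
    exact measureReal_le_one
  have hg0 : ∀ t, 0 ≤ g t := fun t => aux_sup_nonneg _ _ fun P => ENNReal.toReal_nonneg
  have hg1 : ∀ t, g t ≤ 1 := fun t => aux_sup_le _ _ 1 zero_le_one (hprob1 _)
  have hga : AntitoneOn g (Set.Ici 0) := by
    intro s _ t _ hst
    refine aux_sup_le _ _ _ (hg0 s) fun P hPm => ?_
    haveI := hP P hPm
    refine le_trans ?_ (aux_le_sup 𝒫₀ (fun P => (P {ω | s ≤ |X ω|^r}).toReal) 1 zero_le_one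
      (hprob1 _) P hPm)
    exact measureReal_mono (μ := P) fun ω hω => le_trans hst hω
  have hE : ∀ n : ℕ, (⨆ P ∈ 𝒫₀, ∫ ω, (Y (n + 1) ω)^2 ∂P) ≤
      1 + 4 * ∑ k ∈ Finset.range (n + 1), ((k:ℝ) + 1) ^ (2 / r - 1) * (C * g (k + 1)) := by
    intro n
    refine aux_sup_le _ _ _ ?_ fun P hPm => ?_
    · have : 0 ≤ ∑ k ∈ Finset.range (n + 1), ((k:ℝ) + 1) ^ (2 / r - 1) * (C * g (k + 1)) :=
        Finset.sum_nonneg fun k _ => mul_nonneg (by positivity) (mul_nonneg hC.le (hg0 _))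
      linarith
    haveI := hP P hPm
    let A : ℕ → Set Ω := fun k => {ω | ((k:ℝ) + 1) ^ (1 / r) ≤ |Xs (n + 1) ω|}
    have hA : ∀ k, MeasurableSet (A k) := fun k =>
      measurableSet_le measurable_const (hXs (n + 1)).abs
    have hAi : ∀ k, Integrable ((A k).indicator (fun _ => (1:ℝ))) P := fun k =>
      (integrable_const (1:ℝ)).indicator (hA k)
    have hAC : ∀ k, P.real (A k) ≤ C * g (k + 1) := by
      intro k
      have h1 : P.real (A k) ≤ ⨆ P ∈ 𝒫₀, (P (A k)).toReal :=
        aux_le_sup 𝒫₀ (fun P => (P (A k)).toReal) 1 zero_le_one (hprob1 _) P hPm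
      have h2 := hdom (((k:ℝ) + 1) ^ (1 / r)) (by positivity) (n + 1) (by omega)
      have h3 : ∀ ω, ((k:ℝ) + 1) ^ (1 / r) ≤ |X ω| ↔ (k:ℝ) + 1 ≤ |X ω| ^ r := by
        intro ω
        rw [one_div]
        exact Real.rpow_inv_le_iff_of_pos (by positivity) (abs_nonneg _) hr0
      simp only [h3] at h2
      exact h1.trans h2
    have hpt : ∀ ω, (Y (n + 1) ω)^2 ≤ 1 + 4 * ∑ k ∈ Finset.range (n + 1),
        ((k:ℝ) + 1) ^ (2 / r - 1) * (A k).indicator (fun _ => (1:ℝ)) ω := by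
      intro ω
      have h1 := aux_trunc r hr1 hr2 |Xs (n + 1) ω| n
      simp only [abs_nonneg, if_true, mul_one] at h1
      have h2 : (Y (n + 1) ω)^2 ≤ (min |Xs (n + 1) ω| (((n:ℝ) + 1) ^ (1 / r)))^2 := by
        rw [sq_le_sq, hY]
        push_cast
        have hb : 0 ≤ ((n:ℝ) + 1) ^ (1 / r) := by positivity
        generalize ((n:ℝ) + 1) ^ (1 / r) = b at hb
        generalize Xs (n + 1) ω = x
        refine le_trans ?_ (le_abs_self _)
        rw [abs_le]
        constructor
        · rcases le_total |x| b with h | h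
          · rw [min_eq_left h]
            exact le_max_of_le_right (le_min (neg_abs_le x) (by linarith [abs_nonneg x]))
          · rw [min_eq_right h]
            exact le_max_left _ _
        · refine max_le (le_min (by linarith [abs_nonneg x]) (by linarith)) ?_
          exact min_le_min (le_abs_self x) le_rfl
      have h3 : ∀ k, (A k).indicator (fun _ => (1:ℝ)) ω =
          if ((k:ℝ) + 1) ^ (1 / r) ≤ |Xs (n + 1) ω| then 1 else 0 := by
        intro k
        rw [Set.indicator_apply]
        rfl
      simp_rw [h3]
      rw [Finset.sum_range_succ]
      have h4 : 0 ≤ ((n:ℝ) + 1) ^ (2 / r - 1) *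
        (if ((n:ℝ) + 1) ^ (1 / r) ≤ |Xs (n + 1) ω| then (1:ℝ) else 0) := by
        split_ifs <;> positivity
      linarith
    have hsi : Integrable (fun ω => ∑ k ∈ Finset.range (n + 1),
        ((k:ℝ) + 1) ^ (2 / r - 1) * (A k).indicator (fun _ => (1:ℝ)) ω) P :=
      integrable_finset_sum _ fun k _ => (hAi k).const_mul _
    calc ∫ ω, (Y (n + 1) ω)^2 ∂P ≤ ∫ ω, (1 + 4 * ∑ k ∈ Finset.range (n + 1),
        ((k:ℝ) + 1) ^ (2 / r - 1) * (A k).indicator (fun _ => (1:ℝ)) ω) ∂P :=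
          integral_mono_of_nonneg (ae_of_all _ fun ω => sq_nonneg _)
            ((integrable_const _).add (hsi.const_mul 4)) (ae_of_all _ hpt)
      _ = 1 + 4 * ∑ k ∈ Finset.range (n + 1), ((k:ℝ) + 1) ^ (2 / r - 1) * P.real (A k) := by
          rw [integral_add (integrable_const _) (hsi.const_mul 4), integral_const_mul,
            integral_finset_sum _ fun k _ => (hAi k).const_mul _]
          simp only [integral_const_mul, integral_indicator_const _ (hA _)]
          simp
      _ ≤ _ := by
          gcongr with k hk
          exact hAC k
  -- the series of powers
  have h2r : 1 < 2 / r := by rw [lt_div_iff₀ hr0]; linarith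
  have hpow : Summable (fun j : ℕ => if 1 ≤ j then (j:ℝ)^(-(2/r)) else 0) := by
    refine Summable.of_nonneg_of_le (fun j => ?_) (fun j => ?_)
      (Real.summable_nat_rpow.mpr (show -(2 / r) < -1 by linarith))
    · split_ifs <;> positivity
    · split_ifs
      · exact le_rfl
      · positivity
  set S := ∑' j : ℕ, if 1 ≤ j then (j:ℝ)^(-(2/r)) else 0 with hSdef
  have hS : ∀ N : ℕ, ∑ n ∈ Finset.range N, ((n:ℝ) + 1) ^ (-(2 / r)) ≤ S := by
    intro N
    have := hpow.sum_le_tsum (Finset.range (N + 1)) (fun j _ => by split_ifs <;> positivity)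
    rw [Finset.sum_range_succ'] at this
    simpa using this
  have hnn : ∀ j : ℕ, 0 ≤ if 1 ≤ j then
        (⨆ P ∈ 𝒫₀, ∫ ω, (Y j ω)^2 ∂P) / (j:ℝ)^(2/r) else 0 := by
    intro j
    split_ifs
    · exact div_nonneg (aux_sup_nonneg _ _ fun P => integral_nonneg fun ω => sq_nonneg _)
        (by positivity)
    · exact le_rfl
  have hpart : ∀ N : ℕ, ∑ j ∈ Finset.range N, (if 1 ≤ j then
        (⨆ P ∈ 𝒫₀, ∫ ω, (Y j ω)^2 ∂P) / (j:ℝ)^(2/r) else 0) ≤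
        (1 + 4*C) * S + (8*r*C/(2-r)) * ∫ t in Set.Ioi (0:ℝ), g t := by
    intro N
    refine le_trans ?_ (aux_sum r hr1 hr2 C hC g hg0 hg1 hga hCh N S hS)
    refine le_trans (Finset.sum_le_sum_of_subset_of_nonneg
      (Finset.range_mono (Nat.le_succ N)) fun j _ _ => hnn j) ?_
    rw [Finset.sum_range_succ']
    rw [if_neg (by norm_num : ¬ (1 ≤ 0)), add_zero]
    simp only [Nat.le_add_left, if_true]
    refine Finset.sum_le_sum fun n _ => ?_
    push_cast
    rw [Real.rpow_neg (by positivity), ← div_eq_mul_inv]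
    gcongr
    exact hE n
  have hsum := summable_of_sum_range_le hnn hpart
  exact ⟨hsum, hsum.tsum_le_of_sum_range_le hpart⟩
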